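/- arXiv:2405.05664 — 3 statements merged into one kernel-verified Lean document; each statement's English description precedes it below -/
import Mathlib

section
/- Let a<b be real numbers, q ∈ L¹([a,b]) with q ≥ 0 a.e. and q ≢ 0, and let g satisfy (g₊). Then for every α ∈ dom B one has u'(B(α);α) < 0, the map B is continuously differentiable on its domain (one-sidedly at boundary points of the domain), and ∂_α B(α) = − ∂_α u(B(α);α) / u'(B(α);α). -/
open Set MeasureTheory Filter Topology

/-- Carathéodory solution of `u'' + F(t, u) = 0` on `[a,b]`. -/
def IsCaraSol (a b : ℝ) (F : ℝ → ℝ → ℝ) (u u' : ℝ → ℝ) : Prop :=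
  (∀ t ∈ Set.Icc a b, HasDerivAt u (u' t) t) ∧
  IntervalIntegrable (fun s => F s (u s)) MeasureTheory.volume a b ∧
  ∀ t ∈ Set.Icc a b, u' t = u' a - ∫ s in a..t, F s (u s)

/-- The domain of the first-zero map `B` of the shooting method. -/
def domB (a b : ℝ) (U : ℝ → ℝ → ℝ) : Set ℝ :=
  {α : ℝ | 0 < α ∧ ∃ t ∈ Set.Ioc a b, U α t = 0}

/-- The first zero `B(α)` in `(a,b]` of the solution `u(·;α)`. -/
noncomputable def firstZero (a b : ℝ) (U : ℝ → ℝ → ℝ) (α : ℝ) : ℝ :=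
  sInf {t | t ∈ Set.Ioc a b ∧ U α t = 0}

/-!
Since `q g(u) ≥ 0`, every solution is concave. A concave function that is positive just to the
right of `a` is strictly decreasing from its first zero on, so this zero is unique, transversal,
and characterised by the sign of the function on either side of it. Signs are stable under
perturbation of `α`, hence `B` is continuous, even where `B(α) = b`. At such a point the implicit
function theorem does not apply, because `u(·;α)` is not controlled beyond `b`; but it is only
needed for its differentiability part, which survives on sets of the form `S × I` with `I` convex
once a continuous implicit function is given.
-/

theorem IsCaraSol.antitoneOn_deriv {a b : ℝ} {F : ℝ → ℝ → ℝ} {u u' : ℝ → ℝ}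
    (hu : IsCaraSol a b F u u') (hF : ∀ᵐ t ∂volume.restrict (Icc a b), 0 ≤ F t (u t)) :
    AntitoneOn u' (Icc a b) := by
  obtain ⟨-, hint, hu'⟩ := hu
  intro s hs t ht hst
  have hint_t : IntervalIntegrable (fun r => F r (u r)) volume a t :=
    hint.mono_set (uIcc_subset_uIcc_left (Icc_subset_uIcc ht))
  have hF_t : ∀ᵐ r ∂volume.restrict (Ioc a t), 0 ≤ F r (u r) :=
    ae_restrict_of_ae_restrict_of_subset
      (Ioc_subset_Icc_self.trans (Icc_subset_Icc_right ht.2)) hF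
  rw [hu' s hs, hu' t ht]
  gcongr
  exact intervalIntegral.integral_mono_interval le_rfl hs.1 hst hF_t hint_t

theorem IsCaraSol.concaveOn {a b : ℝ} {F : ℝ → ℝ → ℝ} {u u' : ℝ → ℝ}
    (hu : IsCaraSol a b F u u') (hF : ∀ᵐ t ∂volume.restrict (Icc a b), 0 ≤ F t (u t)) :
    ConcaveOn ℝ (Icc a b) u := by
  have hderiv : EqOn u' (deriv u) (interior (Icc a b)) := fun t ht =>
    (hu.1 t (interior_subset ht)).deriv.symm
  exact AntitoneOn.concaveOn_of_deriv (convex_Icc a b)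
    (fun t ht => (hu.1 t ht).continuousAt.continuousWithinAt)
    (fun t ht => (hu.1 t (interior_subset ht)).differentiableAt.differentiableWithinAt)
    (((hu.antitoneOn_deriv hF).mono interior_subset).congr hderiv)

theorem eventually_nhdsGT_pos_of_hasDerivAt {f : ℝ → ℝ} {f' a : ℝ} (hf : HasDerivAt f f' a)
    (hfa : f a = 0) (hf' : 0 < f') : ∀ᶠ t in 𝓝[>] a, 0 < f t := by
  filter_upwards [nhdsWithin_le_nhds
    (eventually_nhdsWithin_sign_eq_of_deriv_pos (hf.deriv.symm ▸ hf') hfa),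
    self_mem_nhdsWithin] with t hsign hat
  rwa [sign_pos (sub_pos.2 hat), sign_eq_one_iff] at hsign

section Concave

variable {S : Set ℝ} {f : ℝ → ℝ} {a z : ℝ}

theorem neg_of_concaveOn_of_nonpos_of_lt {t : ℝ} (hf : ConcaveOn ℝ S f)
    (hpos : ∃ᶠ s in 𝓝[>] a, 0 < f s) (ha : a ∈ S) (hz : z ∈ S) (haz : a < z) (hfz : f z ≤ 0)
    (ht : t ∈ S) (hzt : z < t) : f t < 0 := by
  obtain ⟨p, hfp, hap, hpz⟩ := (hpos.and_eventually (Ioo_mem_nhdsGT haz)).exists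
  have hanti : StrictAntiOn f (S ∩ Ici z) :=
    hf.strictAntiOn (hf.1.ordConnected.out ha hz ⟨hap.le, hpz.le⟩) hpz (hfz.trans_lt hfp)
  exact (hanti ⟨hz, self_mem_Ici⟩ ⟨ht, hzt.le⟩ hzt).trans_le hfz

theorem hasDerivWithinAt_neg_of_concaveOn_of_nonpos {f' : ℝ} (hf : ConcaveOn ℝ S f)
    (hpos : ∃ᶠ s in 𝓝[>] a, 0 < f s) (ha : a ∈ S) (hz : z ∈ S) (haz : a < z) (hfz : f z ≤ 0)
    (hf' : HasDerivWithinAt f f' S z) : f' < 0 := by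
  obtain ⟨p, hfp, hap, hpz⟩ := (hpos.and_eventually (Ioo_mem_nhdsGT haz)).exists
  calc f' ≤ slope f p z :=
        hf.le_slope_of_hasDerivWithinAt (hf.1.ordConnected.out ha hz ⟨hap.le, hpz.le⟩) hz hpz hf'
    _ < 0 := by
        rw [slope_def_field]
        exact div_neg_of_neg_of_pos (sub_neg.2 (hfz.trans_lt hfp)) (sub_pos.2 hpz)

end Concave

section FirstZero

variable {a b : ℝ} {U : ℝ → ℝ → ℝ} {α t : ℝ}

theorem firstZero_eq (hU : ConcaveOn ℝ (Icc a b) (U α)) (hpos : ∃ᶠ s in 𝓝[>] a, 0 < U α s)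
    (ht : t ∈ Ioc a b) (hUt : U α t = 0) : firstZero a b U α = t := by
  refine IsLeast.csInf_eq ⟨⟨ht, hUt⟩, fun s hs => not_lt.1 fun hst => ?_⟩
  have hab : a ≤ b := ht.1.le.trans ht.2
  exact (neg_of_concaveOn_of_nonpos_of_lt hU hpos (left_mem_Icc.2 hab)
    (Ioc_subset_Icc_self hs.1) hs.1.1 hs.2.le (Ioc_subset_Icc_self ht) hst).ne hUt

theorem firstZero_mem_Ioc (hU : ConcaveOn ℝ (Icc a b) (U α))
    (hpos : ∃ᶠ s in 𝓝[>] a, 0 < U α s) (hα : α ∈ domB a b U) : firstZero a b U α ∈ Ioc a b := by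
  obtain ⟨-, z, hz, hUz⟩ := hα
  rwa [firstZero_eq hU hpos hz hUz]

theorem apply_firstZero (hU : ConcaveOn ℝ (Icc a b) (U α))
    (hpos : ∃ᶠ s in 𝓝[>] a, 0 < U α s) (hα : α ∈ domB a b U) : U α (firstZero a b U α) = 0 := by
  obtain ⟨-, z, hz, hUz⟩ := hα
  rwa [firstZero_eq hU hpos hz hUz]

theorem neg_of_firstZero_lt (hU : ConcaveOn ℝ (Icc a b) (U α))
    (hpos : ∃ᶠ s in 𝓝[>] a, 0 < U α s) (hα : α ∈ domB a b U) (ht : t ∈ Ioc a b)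
    (hlt : firstZero a b U α < t) : U α t < 0 := by
  have hmem := firstZero_mem_Ioc hU hpos hα
  exact neg_of_concaveOn_of_nonpos_of_lt hU hpos (left_mem_Icc.2 (ht.1.le.trans ht.2))
    (Ioc_subset_Icc_self hmem) hmem.1 (apply_firstZero hU hpos hα).le (Ioc_subset_Icc_self ht) hlt

theorem pos_of_lt_firstZero (hU : ConcaveOn ℝ (Icc a b) (U α))
    (hpos : ∃ᶠ s in 𝓝[>] a, 0 < U α s) (hα : α ∈ domB a b U) (ht : t ∈ Ioc a b)
    (hlt : t < firstZero a b U α) : 0 < U α t := by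
  by_contra! hUt
  exact (neg_of_concaveOn_of_nonpos_of_lt hU hpos (left_mem_Icc.2 (ht.1.le.trans ht.2))
    (Ioc_subset_Icc_self ht) ht.1 hUt (Ioc_subset_Icc_self (firstZero_mem_Ioc hU hpos hα))
    hlt).ne (apply_firstZero hU hpos hα)

theorem lt_firstZero_iff (hU : ConcaveOn ℝ (Icc a b) (U α)) (hpos : ∃ᶠ s in 𝓝[>] a, 0 < U α s)
    (hα : α ∈ domB a b U) (ht : t ∈ Ioc a b) : t < firstZero a b U α ↔ 0 < U α t := by
  refine ⟨pos_of_lt_firstZero hU hpos hα ht, fun hUt => not_le.1 fun hle => ?_⟩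
  rcases hle.eq_or_lt with rfl | hlt
  · exact hUt.ne' (apply_firstZero hU hpos hα)
  · exact hUt.not_gt (neg_of_firstZero_lt hU hpos hα ht hlt)

theorem firstZero_lt_iff (hU : ConcaveOn ℝ (Icc a b) (U α)) (hpos : ∃ᶠ s in 𝓝[>] a, 0 < U α s)
    (hα : α ∈ domB a b U) (ht : t ∈ Ioc a b) : firstZero a b U α < t ↔ U α t < 0 := by
  refine ⟨neg_of_firstZero_lt hU hpos hα ht, fun hUt => not_le.1 fun hle => ?_⟩
  rcases hle.eq_or_lt with rfl | hlt
  · exact hUt.ne (apply_firstZero hU hpos hα)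
  · exact hUt.not_gt (pos_of_lt_firstZero hU hpos hα ht hlt)

theorem continuousOn_firstZero (hU : ∀ α ∈ domB a b U, ConcaveOn ℝ (Icc a b) (U α))
    (hpos : ∀ α ∈ domB a b U, ∃ᶠ s in 𝓝[>] a, 0 < U α s)
    (hcont : ∀ t ∈ Ioc a b, ContinuousOn (fun α => U α t) (domB a b U)) :
    ContinuousOn (firstZero a b U) (domB a b U) := by
  intro α hα
  have hmem := firstZero_mem_Ioc (hU α hα) (hpos α hα) hα
  refine tendsto_order.2 ⟨fun x hx => ?_, fun x hx => ?_⟩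
  · obtain ⟨t, hxt, htB⟩ := exists_between (max_lt hx hmem.1)
    have ht : t ∈ Ioc a b := ⟨(le_max_right _ _).trans_lt hxt, htB.le.trans hmem.2⟩
    have hUt : 0 < U α t := (lt_firstZero_iff (hU α hα) (hpos α hα) hα ht).1 htB
    filter_upwards [(hcont t ht α hα).eventually (lt_mem_nhds hUt), self_mem_nhdsWithin]
      with β hUβ hβ
    exact ((le_max_left _ _).trans_lt hxt).trans
      ((lt_firstZero_iff (hU β hβ) (hpos β hβ) hβ ht).2 hUβ)
  · rcases lt_or_ge b x with hbx | hxb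
    · filter_upwards [self_mem_nhdsWithin] with β hβ
      exact (firstZero_mem_Ioc (hU β hβ) (hpos β hβ) hβ).2.trans_lt hbx
    · have hx' : x ∈ Ioc a b := ⟨hmem.1.trans hx, hxb⟩
      have hUx : U α x < 0 := (firstZero_lt_iff (hU α hα) (hpos α hα) hα hx').1 hx
      filter_upwards [(hcont x hx' α hα).eventually (gt_mem_nhds hUx), self_mem_nhdsWithin]
        with β hUβ hβ
      exact (firstZero_lt_iff (hU β hβ) (hpos β hβ) hβ hx').2 hUβ

end FirstZero

section ImplicitFunction

open Asymptotics

theorem isLittleO_apply_graph_sub {𝕜 X F G : Type*} [TopologicalSpace X]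
    [NontriviallyNormedField 𝕜] [IsRCLikeNormedField 𝕜] [NormedAddCommGroup F] [NormedSpace ℝ F]
    [NormedSpace 𝕜 F] [NormedAddCommGroup G] [NormedSpace 𝕜 G] {f : X → F → G}
    {f₂ : X → F → F →L[𝕜] G} {φ : X → F} {s : Set X} {t : Set F} {x : X} (ht : Convex ℝ t)
    (hx : x ∈ s) (hφ : ContinuousWithinAt φ s x) (hφt : MapsTo φ s t)
    (hf₂ : ∀ y ∈ s, ∀ z ∈ t, HasFDerivWithinAt (f y) (f₂ y z) t z)
    (hf₂_cont : ContinuousWithinAt ↿f₂ (s ×ˢ t) (x, φ x)) :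
    (fun y => f y (φ y) - f y (φ x) - f₂ x (φ x) (φ y - φ x)) =o[𝓝[s] x]
      fun y => φ y - φ x := by
  refine isLittleO_iff.2 fun ε hε => ?_
  have hseg : ∀ y ∈ s, segment ℝ (φ x) (φ y) ⊆ t := fun y hy =>
    ht.segment_subset (hφt hx) (hφt hy)
  have hclose : ∀ᶠ p in 𝓝[s] x ×ˢ 𝓝[t] φ x, ‖f₂ p.1 p.2 - f₂ x (φ x)‖ < ε := by
    rw [← nhdsWithin_prod_eq]
    simpa only [dist_eq_norm] using! Metric.tendsto_nhds.1 hf₂_cont ε hε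
  filter_upwards [self_mem_nhdsWithin, hclose.segment_of_prod_nhdsWithin
    (r := fun y z => ‖f₂ y z - f₂ x (φ x)‖ < ε) tendsto_const_nhds hφ
    (eventually_nhdsWithin_of_forall hseg)] with y hy hy_close
  exact (convex_segment (φ x) (φ y)).norm_image_sub_le_of_norm_hasFDerivWithin_le'
    (fun z hz => (hf₂ y hy z (hseg y hy hz)).mono (hseg y hy)) (fun z hz => (hy_close z hz).le)
    (left_mem_segment ..) (right_mem_segment ..)

theorem hasFDerivWithinAt_of_apply_graph_eq {𝕜 E F G : Type*} [NontriviallyNormedField 𝕜]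
    [IsRCLikeNormedField 𝕜] [NormedAddCommGroup E] [NormedSpace 𝕜 E] [NormedAddCommGroup F]
    [NormedSpace ℝ F] [NormedSpace 𝕜 F] [NormedAddCommGroup G] [NormedSpace 𝕜 G]
    {f : E → F → G} {f₁ : E →L[𝕜] G} {f₂ : E → F → F →L[𝕜] G} {L : F ≃L[𝕜] G} {φ : E → F}
    {s : Set E} {t : Set F} {x : E} (ht : Convex ℝ t) (hx : x ∈ s) (hφ : ContinuousWithinAt φ s x)
    (hφt : MapsTo φ s t) (hgraph : ∀ y ∈ s, f y (φ y) = f x (φ x))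
    (hf₁ : HasFDerivWithinAt (fun y => f y (φ x)) f₁ s x)
    (hf₂ : ∀ y ∈ s, ∀ z ∈ t, HasFDerivWithinAt (f y) (f₂ y z) t z)
    (hf₂_cont : ContinuousWithinAt ↿f₂ (s ×ˢ t) (x, φ x)) (hL : f₂ x (φ x) = L) :
    HasFDerivWithinAt φ (-(L.symm : G →L[𝕜] F).comp f₁) s x := by
  let A : E →L[𝕜] F := -(L.symm : G →L[𝕜] F).comp f₁
  let r₁ : E → G := fun y => f y (φ x) - f x (φ x) - f₁ (y - x)
  let r₂ : E → G := fun y => f y (φ y) - f y (φ x) - L (φ y - φ x)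
  have hr₁ : (fun y => L.symm (r₁ y)) =o[𝓝[s] x] fun y => y - x :=
    (L.symm.isBigO_comp ..).trans_isLittleO hf₁.isLittleO
  have hr₂ : (fun y => L.symm (r₂ y)) =o[𝓝[s] x] fun y => φ y - φ x := by
    refine (L.symm.isBigO_comp ..).trans_isLittleO ?_
    simpa only [hL] using! isLittleO_apply_graph_sub ht hx hφ hφt hf₂ hf₂_cont
  have hsum : ∀ y ∈ s, φ y - φ x - A (y - x) = -(L.symm (r₁ y) + L.symm (r₂ y)) := by
    intro y hy
    simp only [A, r₁, r₂, hgraph y hy, map_sub, neg_apply, ContinuousLinearMap.comp_apply,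
      ContinuousLinearEquiv.coe_coe, ContinuousLinearEquiv.symm_apply_apply]
    abel
  -- Absorbing the remainder `o(φ y - φ x)` on the left shows that `φ` is Lipschitz at `x`.
  have hφ_bigO : (fun y => φ y - φ x) =O[𝓝[s] x] fun y => y - x := by
    refine hr₂.right_isBigO_add.trans ?_
    refine ((A.isBigO_sub _ x).sub hr₁.isBigO).congr' ?_ EventuallyEq.rfl
    filter_upwards [self_mem_nhdsWithin] with y hy
    linear_combination (norm := module) -hsum y hy
  refine .of_isLittleO ((hr₁.add (hr₂.trans_isBigO hφ_bigO)).neg_left.congr' ?_ .rfl)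
  filter_upwards [self_mem_nhdsWithin] with y hy using (hsum y hy).symm

theorem hasDerivWithinAt_of_apply_graph_eq {f : ℝ → ℝ → ℝ} {f₁ : ℝ} {f₂ : ℝ → ℝ → ℝ}
    {φ : ℝ → ℝ} {s t : Set ℝ} {x : ℝ} (ht : Convex ℝ t) (hx : x ∈ s)
    (hφ : ContinuousWithinAt φ s x) (hφt : MapsTo φ s t)
    (hgraph : ∀ y ∈ s, f y (φ y) = f x (φ x))
    (hf₁ : HasDerivWithinAt (fun y => f y (φ x)) f₁ s x)
    (hf₂ : ∀ y ∈ s, ∀ z ∈ t, HasDerivWithinAt (f y) (f₂ y z) t z)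
    (hf₂_cont : ContinuousWithinAt ↿f₂ (s ×ˢ t) (x, φ x)) (hne : f₂ x (φ x) ≠ 0) :
    HasDerivWithinAt φ (-f₁ / f₂ x (φ x)) s x := by
  let L : ℝ ≃L[ℝ] ℝ := ContinuousLinearEquiv.unitsEquivAut ℝ (Units.mk0 _ hne)
  have hL : ContinuousLinearMap.toSpanSingleton ℝ (f₂ x (φ x)) = L := by
    ext
    simp [L]
  have hspan : Continuous fun c : ℝ => ContinuousLinearMap.toSpanSingleton ℝ c :=
    (ContinuousLinearMap.toSpanSingletonCLE (𝕜 := ℝ) (E := ℝ)).continuous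
  have hφ' := hasFDerivWithinAt_of_apply_graph_eq ht hx hφ hφt hgraph hf₁.hasFDerivWithinAt
    (fun y hy z hz => (hf₂ y hy z hz).hasFDerivWithinAt)
    (hspan.continuousAt.comp_continuousWithinAt hf₂_cont) hL
  refine hφ'.hasDerivWithinAt.congr_deriv ?_
  simp [L, div_eq_mul_inv]

end ImplicitFunction

theorem firstZero_continuously_differentiable_general {a b : ℝ} {U U' DU : ℝ → ℝ → ℝ}
    (hU_concave : ∀ α > 0, ConcaveOn ℝ (Icc a b) (U α))
    (hU_pos : ∀ α > 0, ∃ᶠ t in 𝓝[>] a, 0 < U α t)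
    (hU' : ∀ α > 0, ∀ t ∈ Icc a b, HasDerivWithinAt (U α) (U' α t) (Icc a b) t)
    (hDU : ∀ α > 0, ∀ t ∈ Icc a b, HasDerivAt (fun β => U β t) (DU α t) α)
    (hU'_cont : ContinuousOn (fun p : ℝ × ℝ => U' p.1 p.2) (Ioi 0 ×ˢ Icc a b))
    (hDU_cont : ContinuousOn (fun p : ℝ × ℝ => DU p.1 p.2) (Ioi 0 ×ˢ Icc a b)) :
    (∀ α ∈ domB a b U, U' α (firstZero a b U α) < 0) ∧
    ∃ B' : ℝ → ℝ,
      ContinuousOn B' (domB a b U) ∧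
      ∀ α ∈ domB a b U,
        HasDerivWithinAt (firstZero a b U) (B' α) (domB a b U) α ∧
        B' α = - DU α (firstZero a b U α) / U' α (firstZero a b U α) := by
  have hmem : ∀ α ∈ domB a b U, firstZero a b U α ∈ Ioc a b := fun α hα =>
    firstZero_mem_Ioc (hU_concave α hα.1) (hU_pos α hα.1) hα
  have hzero : ∀ α ∈ domB a b U, U α (firstZero a b U α) = 0 := fun α hα =>
    apply_firstZero (hU_concave α hα.1) (hU_pos α hα.1) hα
  have hmaps : MapsTo (firstZero a b U) (domB a b U) (Icc a b) := fun α hα =>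
    Ioc_subset_Icc_self (hmem α hα)
  have hneg : ∀ α ∈ domB a b U, U' α (firstZero a b U α) < 0 := fun α hα =>
    hasDerivWithinAt_neg_of_concaveOn_of_nonpos (hU_concave α hα.1) (hU_pos α hα.1)
      (left_mem_Icc.2 ((hmem α hα).1.le.trans (hmem α hα).2)) (hmaps hα) (hmem α hα).1
      (hzero α hα).le (hU' α hα.1 _ (hmaps hα))
  have hB : ContinuousOn (firstZero a b U) (domB a b U) :=
    continuousOn_firstZero (fun α hα => hU_concave α hα.1) (fun α hα => hU_pos α hα.1)
      fun t ht α hα => (hDU α hα.1 t (Ioc_subset_Icc_self ht)).continuousAt.continuousWithinAt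
  have hgraph : ContinuousOn (fun α => (α, firstZero a b U α)) (domB a b U) :=
    continuousOn_id.prodMk hB
  have hgraph_maps : MapsTo (fun α => (α, firstZero a b U α)) (domB a b U) (Ioi 0 ×ˢ Icc a b) :=
    fun α hα => ⟨hα.1, hmaps hα⟩
  refine ⟨hneg, fun α => -DU α (firstZero a b U α) / U' α (firstZero a b U α), ?_,
    fun α hα => ⟨?_, rfl⟩⟩
  · exact (hDU_cont.comp hgraph hgraph_maps).neg.div (hU'_cont.comp hgraph hgraph_maps)
      fun α hα => (hneg α hα).ne
  · exact hasDerivWithinAt_of_apply_graph_eq (convex_Icc a b) hα (hB α hα) hmaps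
      (fun β hβ => (hzero β hβ).trans (hzero α hα).symm)
      (hDU α hα.1 _ (hmaps hα)).hasDerivWithinAt (fun β hβ => hU' β hβ.1)
      ((hU'_cont _ (hgraph_maps hα)).mono (prod_mono (fun β hβ => hβ.1) subset_rfl)) (hneg α hα).ne

/-- For `α ∈ dom B` one has `u'(B(α);α) < 0`, the map `B` is
continuously differentiable on its domain (in the sense of derivatives within
the domain), and `B'(α) = - ∂_α u(B(α);α) / u'(B(α);α)`. -/
theorem firstZero_continuously_differentiable
    (a b : ℝ) (hab : a < b)
    (q : ℝ → ℝ)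
    (hq_int : IntegrableOn q (Set.Icc a b))
    (hq_nonneg : ∀ᵐ t ∂(volume.restrict (Set.Icc a b)), 0 ≤ q t)
    (hq_ne : ¬ (∀ᵐ t ∂(volume.restrict (Set.Icc a b)), q t = 0))
    (g : ℝ → ℝ)
    (hg_C1 : ContDiffOn ℝ 1 g (Set.Ici 0))
    (hg0 : g 0 = 0)
    (hg_pos : ∀ s > 0, 0 < g s)
    (hg_ext : ∀ s ≤ (0 : ℝ), g s = 0)
    -- the shooting family `U α = u(·;α)`, with time-derivative `U' α` and
    -- derivative `DU α t = ∂_α u(t;α)` with respect to the initial slope: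
    (U U' DU : ℝ → ℝ → ℝ)
    (hU_sol : ∀ α ≥ (0 : ℝ), IsCaraSol a b (fun s x => q s * g x) (U α) (U' α))
    (hU_init : ∀ α ≥ (0 : ℝ), U α a = 0 ∧ U' α a = α)
    (hU_uniq : ∀ α ≥ (0 : ℝ), ∀ v v' : ℝ → ℝ,
        IsCaraSol a b (fun s x => q s * g x) v v' → v a = 0 → v' a = α →
        ∀ t ∈ Set.Icc a b, v t = U α t)
    (hDU : ∀ α > (0 : ℝ), ∀ t ∈ Set.Icc a b, HasDerivAt (fun β => U β t) (DU α t) α)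
    -- continuous dependence of `u`, `u'` and `∂_α u` on `(α, t)`:
    (hU_cont : ContinuousOn (fun p : ℝ × ℝ => U p.1 p.2) (Set.Ioi 0 ×ˢ Set.Icc a b))
    (hU'_cont : ContinuousOn (fun p : ℝ × ℝ => U' p.1 p.2) (Set.Ioi 0 ×ˢ Set.Icc a b))
    (hDU_cont : ContinuousOn (fun p : ℝ × ℝ => DU p.1 p.2) (Set.Ioi 0 ×ˢ Set.Icc a b)) :
    (∀ α ∈ domB a b U, U' α (firstZero a b U α) < 0) ∧
    ∃ B' : ℝ → ℝ,
      ContinuousOn B' (domB a b U) ∧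
      ∀ α ∈ domB a b U,
        HasDerivWithinAt (firstZero a b U) (B' α) (domB a b U) α ∧
        B' α = - DU α (firstZero a b U α) / U' α (firstZero a b U α) := by
  have hg_nonneg : ∀ x, 0 ≤ g x := fun x =>
    (le_or_gt x 0).elim (fun hx => (hg_ext x hx).ge) fun hx => (hg_pos x hx).le
  have hU_deriv : ∀ α > 0, ∀ t ∈ Icc a b, HasDerivAt (U α) (U' α t) t := fun α hα =>
    (hU_sol α hα.le).1
  refine firstZero_continuously_differentiable_general (fun α hα => ?_) (fun α hα => ?_)
    (fun α hα t ht => (hU_deriv α hα t ht).hasDerivWithinAt) hDU hU'_cont hDU_cont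
  · exact (hU_sol α hα.le).concaveOn (hq_nonneg.mono fun t hqt => mul_nonneg hqt (hg_nonneg _))
  · obtain ⟨hU_a, hU'_a⟩ := hU_init α hα.le
    exact (eventually_nhdsGT_pos_of_hasDerivAt (hU_deriv α hα a (left_mem_Icc.2 hab.le)) hU_a
      (hU'_a.symm ▸ hα)).frequently
end

section
/- (Sturm comparison theorem with L¹ coefficients.) Let ω₁, ω₂ ∈ L¹([c,d]) with ω₁(t) ≤ ω₂(t) a.e. on [c,d] and ω₁ < ω₂ on a set of positive Lebesgue measure. Let u₁ and u₂ be nontrivial Carathéodory solutions of u_i'' + ω_i(t) u_i = 0 on (c,d), i = 1,2. Assume that either (i) u₁(c) = 0 = u₁(d), or (ii) u₁'(c) = 0 = u₁(d) and u₂'(c) = 0. Then u₂ vanishes at some point of the open interval (c,d). -/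
open Set MeasureTheory Filter Topology

/-- Carathéodory solution of the linear equation `u'' + ω(t) u = 0` on `[c,d]`:
`u'` is the derivative of `u`, it is absolutely continuous, and the equation
holds a.e. (equivalently, `u'` is the indefinite integral of `-ω u`). -/
def IsLinCaraSol (c d : ℝ) (ω : ℝ → ℝ) (u u' : ℝ → ℝ) : Prop :=
  (∀ t ∈ Set.Icc c d, HasDerivAt u (u' t) t) ∧
  IntervalIntegrable (fun s => ω s * u s) MeasureTheory.volume c d ∧
  ∀ t ∈ Set.Icc c d, u' t = u' c - ∫ s in c..t, ω s * u s

/-!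
Suppose `u₂` has no zero in `(c, d)`. On a maximal interval `(a, b)` on which `u₁ ≠ 0`, the
Wronskian `W = u₂ u₁' - u₂' u₁` has derivative `(ω₂ - ω₁) u₁ u₂`, of constant sign; after replacing
`u₂` by `-u₂` if necessary, this sign is nonnegative. At an endpoint where `u₁` vanishes, `W` equals
`(u₁ u₂)'`, and at `c` in case (ii) it is `0`; hence `W a ≥ 0 ≥ W b`, and monotonicity forces
`W = 0` on `[a, b]`. Thus `u₂` is a multiple of `u₁` there, a zero of `u₁` at `a` or `b` is a zero
of `u₂`, and so `(a, b) = (c, d)`. Finally `W' = 0` gives `ω₁ = ω₂` a.e.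
-/

section Topology

theorem forall_pos_or_forall_neg_of_isPreconnected {X Y : Type*} [TopologicalSpace X]
    [TopologicalSpace Y] [LinearOrder Y] [OrderClosedTopology Y] [Zero Y] {s : Set X} {f : X → Y}
    (hs : IsPreconnected s) (hf : ContinuousOn f s) (hf0 : ∀ x ∈ s, f x ≠ 0) :
    (∀ x ∈ s, 0 < f x) ∨ ∀ x ∈ s, f x < 0 := by
  by_contra! ⟨⟨x, hx, hfx⟩, y, hy, hfy⟩
  obtain ⟨z, hz, hfz⟩ := hs.intermediate_value hx hy hf ⟨hfx, hfy⟩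
  exact hf0 z hz hfz

theorem exists_mem_Ioo_disjoint_of_notMem {α : Type*} [ConditionallyCompleteLinearOrder α]
    [TopologicalSpace α] [OrderTopology α] {K : Set α} (hK : IsClosed K) {c d s : α}
    (hc : c ∈ K) (hd : d ∈ K) (hs : s ∈ Icc c d) (hsK : s ∉ K) :
    ∃ a ∈ K, ∃ b ∈ K, s ∈ Ioo a b ∧ c ≤ a ∧ b ≤ d ∧ Disjoint (Ioo a b) K := by
  obtain ⟨⟨haK, has⟩, ha⟩ := (hK.inter isClosed_Iic).isGreatest_csSup
    ⟨c, hc, hs.1⟩ (bddAbove_Iic.mono inter_subset_right)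
  obtain ⟨⟨hbK, hsb⟩, hb⟩ := (hK.inter isClosed_Ici).isLeast_csInf
    ⟨d, hd, hs.2⟩ (bddBelow_Ici.mono inter_subset_right)
  refine ⟨_, haK, _, hbK, ⟨lt_of_le_of_ne has ?_, lt_of_le_of_ne hsb ?_⟩,
    ha ⟨hc, hs.1⟩, hb ⟨hd, hs.2⟩, disjoint_left.2 fun t ht htK => ?_⟩
  · exact ne_of_mem_of_not_mem haK hsK
  · exact (ne_of_mem_of_not_mem hbK hsK).symm
  · rcases le_total t s with hts | hst
    · exact (ha ⟨htK, hts⟩).not_gt ht.1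
    · exact (hb ⟨htK, hst⟩).not_gt ht.2

theorem exists_maximal_Ioo_forall_ne {α Y : Type*} [ConditionallyCompleteLinearOrder α]
    [TopologicalSpace α] [OrderTopology α] [TopologicalSpace Y] [T1Space Y] {f : α → Y}
    {c d s : α} {y : Y} (hf : ContinuousOn f (Icc c d)) (hs : s ∈ Ioo c d) (hfs : f s ≠ y) :
    ∃ a b, s ∈ Ioo a b ∧ c ≤ a ∧ b ≤ d ∧ (a = c ∨ f a = y) ∧ (b = d ∨ f b = y) ∧
      ∀ t ∈ Ioo a b, f t ≠ y := by
  set K : Set α := {c, d} ∪ (Icc c d ∩ f ⁻¹' {y})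
  have hK : IsClosed K := (toFinite {c, d}).isClosed.union
    (hf.preimage_isClosed_of_isClosed isClosed_Icc isClosed_singleton)
  have hsK : s ∉ K := by simp [K, hs.1.ne', hs.2.ne, hfs]
  obtain ⟨a, haK, b, hbK, hsab, hca, hbd, hdisj⟩ := exists_mem_Ioo_disjoint_of_notMem hK
    (by simp [K]) (by simp [K]) (Ioo_subset_Icc_self hs) hsK
  refine ⟨a, b, hsab, hca, hbd, ?_, ?_, fun t ht hft => disjoint_left.1 hdisj ht
    (Or.inr ⟨⟨hca.trans ht.1.le, ht.2.le.trans hbd⟩, hft⟩)⟩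
  · rcases haK with (h | h) | h
    exacts [.inl h, absurd (h ▸ hsab.1) hs.2.not_gt, .inr h.2]
  · rcases hbK with (h | h) | h
    exacts [absurd (h ▸ hsab.2) hs.1.not_gt, .inl h, .inr h.2]

theorem exists_mem_Ioo_ne_of_exists_mem_Icc_ne {α Y : Type*} [TopologicalSpace α] [LinearOrder α]
    [OrderTopology α] [DenselyOrdered α] [TopologicalSpace Y] [T2Space Y] {f : α → Y} {c d : α}
    {y : Y} (hcd : c ≠ d) (hf : ContinuousOn f (Icc c d)) (hfy : ∃ t ∈ Icc c d, f t ≠ y) :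
    ∃ t ∈ Ioo c d, f t ≠ y := by
  by_contra! hconst
  obtain ⟨t, ht, hft⟩ := hfy
  exact hft (EqOn.of_subset_closure (g := fun _ => y) hconst hf continuousOn_const
    Ioo_subset_Icc_self (closure_Ioo hcd).ge ht)

end Topology

section Calculus

variable {a b : ℝ}

theorem mul_sub_nonneg_of_hasDerivWithinAt_of_isMinOn {f : ℝ → ℝ} {f' x y : ℝ} {s : Set ℝ}
    (hs : Convex ℝ s) (hx : x ∈ s) (hy : y ∈ s) (hmin : IsMinOn f s x)
    (hf : HasDerivWithinAt f f' s x) : 0 ≤ f' * (y - x) := by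
  have hcone : y - x ∈ posTangentConeAt s x :=
    sub_mem_posTangentConeAt_of_segment_subset (hs.segment_subset hx hy)
  simpa [mul_comm] using hmin.localize.hasFDerivWithinAt_nonneg hf.hasFDerivWithinAt hcone

theorem absolutelyContinuousOnInterval_congr {X : Type*} [PseudoMetricSpace X] {f g : ℝ → X}
    (hf : AbsolutelyContinuousOnInterval f a b) (hfg : EqOn f g (uIcc a b)) :
    AbsolutelyContinuousOnInterval g a b := by
  rw [absolutelyContinuousOnInterval_iff] at hf ⊢
  intro ε hε
  obtain ⟨δ, hδ, hsum⟩ := hf ε hε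
  refine ⟨δ, hδ, fun E hE hlen => (Finset.sum_congr rfl fun i hi => ?_).trans_lt (hsum E hE hlen)⟩
  rw [hfg (hE.1 i hi).1, hfg (hE.1 i hi).2]

theorem absolutelyContinuousOnInterval_of_hasDerivWithinAt {E : Type*} [NormedAddCommGroup E]
    [NormedSpace ℝ E] {f f' : ℝ → E}
    (hf : ∀ t ∈ uIcc a b, HasDerivWithinAt f (f' t) (uIcc a b) t)
    (hf' : ContinuousOn f' (uIcc a b)) : AbsolutelyContinuousOnInterval f a b := by
  obtain ⟨C, hC⟩ := isCompact_uIcc.exists_bound_of_continuousOn hf'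
  exact ((convex_uIcc a b).lipschitzOnWith_of_nnnorm_hasDerivWithin_le (C := C.toNNReal) hf
    fun t ht => NNReal.le_toNNReal_of_coe_le (hC t ht)).absolutelyContinuousOnInterval

theorem monotoneOn_of_ae_deriv_nonneg {f : ℝ → ℝ}
    (hf : AbsolutelyContinuousOnInterval f a b)
    (hf' : ∀ᵐ t, t ∈ Ioo a b → 0 ≤ deriv f t) : MonotoneOn f (Icc a b) := by
  intro x hx y hy hxy
  have hsub : uIcc x y ⊆ uIcc a b :=
    uIcc_subset_uIcc (Icc_subset_uIcc hx) (Icc_subset_uIcc hy)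
  have hint : 0 ≤ ∫ t in x..y, deriv f t := by
    refine intervalIntegral.integral_nonneg_of_ae_restrict hxy ?_
    rw [← restrict_Ioo_eq_restrict_Icc]
    refine (ae_restrict_iff' measurableSet_Ioo).2 ?_
    filter_upwards [hf'] with t ht htxy using ht (Ioo_subset_Ioo hx.1 hy.2 htxy)
  rwa [(hf.mono hsub).integral_deriv_eq_sub, sub_nonneg] at hint

end Calculus

section Wronskian

/-- The Wronskian `u v' - u' v` of two functions `u` and `v`, in terms of the functions and of their
derivatives `u'` and `v'`, which are passed separately as in `IsLinCaraSol`. -/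
def wronskian (u u' v v' : ℝ → ℝ) (t : ℝ) : ℝ :=
  u t * v' t - u' t * v t

variable {u u' v v' : ℝ → ℝ} {a b t : ℝ}

theorem wronskian_neg_left : wronskian (-u) (-u') v v' = -wronskian u u' v v' := by
  ext t
  simp only [wronskian, Pi.neg_apply]
  ring

theorem hasDerivAt_mul_wronskian_of_eq_zero (hu : HasDerivAt u (u' t) t)
    (hv : HasDerivAt v (v' t) t) (hv0 : v t = 0) :
    HasDerivAt (u * v) (wronskian u u' v v' t) t :=
  (hu.mul hv).congr_deriv (by simp [wronskian, hv0])

theorem wronskian_left_nonneg_of_mul_nonneg (hab : a < b) (hu : HasDerivAt u (u' a) a)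
    (hv : HasDerivAt v (v' a) a) (huv : ∀ t ∈ Icc a b, 0 ≤ u t * v t) (hv0 : v a = 0) :
    0 ≤ wronskian u u' v v' a := by
  have hmin : IsMinOn (u * v) (Icc a b) a := fun t ht => by simpa [hv0] using huv t ht
  have hmul : 0 ≤ wronskian u u' v v' a * (b - a) :=
    mul_sub_nonneg_of_hasDerivWithinAt_of_isMinOn (convex_Icc a b) (left_mem_Icc.2 hab.le)
      (right_mem_Icc.2 hab.le) hmin (hasDerivAt_mul_wronskian_of_eq_zero hu hv hv0).hasDerivWithinAt
  exact nonneg_of_mul_nonneg_left hmul (sub_pos.2 hab)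

theorem wronskian_right_nonpos_of_mul_nonneg (hab : a < b) (hu : HasDerivAt u (u' b) b)
    (hv : HasDerivAt v (v' b) b) (huv : ∀ t ∈ Icc a b, 0 ≤ u t * v t) (hv0 : v b = 0) :
    wronskian u u' v v' b ≤ 0 := by
  have hmin : IsMinOn (u * v) (Icc a b) b := fun t ht => by simpa [hv0] using huv t ht
  have hmul : 0 ≤ wronskian u u' v v' b * (a - b) :=
    mul_sub_nonneg_of_hasDerivWithinAt_of_isMinOn (convex_Icc a b) (right_mem_Icc.2 hab.le)
      (left_mem_Icc.2 hab.le) hmin (hasDerivAt_mul_wronskian_of_eq_zero hu hv hv0).hasDerivWithinAt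
  exact nonpos_of_mul_nonneg_left hmul (sub_neg.2 hab)

theorem exists_eqOn_const_mul_of_wronskian_eq_zero (hab : a < b)
    (hu : ∀ t ∈ Icc a b, HasDerivAt u (u' t) t) (hv : ∀ t ∈ Icc a b, HasDerivAt v (v' t) t)
    (hv0 : ∀ t ∈ Ioo a b, v t ≠ 0) (hW : ∀ t ∈ Ioo a b, wronskian u u' v v' t = 0) :
    ∃ k, EqOn u (fun t => k * v t) (Icc a b) := by
  have hderiv : ∀ t ∈ Ioo a b, HasDerivAt (u / v) 0 t := fun t ht => by
    have htI := Ioo_subset_Icc_self ht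
    refine ((hu t htI).div (hv t htI) (hv0 t ht)).congr_deriv ?_
    rw [← neg_sub, show u t * v' t - u' t * v t = 0 from hW t ht, neg_zero, zero_div]
  obtain ⟨k, hk⟩ := isOpen_Ioo.exists_is_const_of_deriv_eq_zero isPreconnected_Ioo
    (fun t ht => (hderiv t ht).differentiableAt.differentiableWithinAt)
    (fun t ht => (hderiv t ht).deriv)
  have hIoo : EqOn u (fun t => k * v t) (Ioo a b) := fun t ht =>
    (div_eq_iff (hv0 t ht)).1 (hk t ht)
  exact ⟨k, hIoo.of_subset_closure (fun t ht => (hu t ht).continuousAt.continuousWithinAt)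
    (fun t ht => ((hv t ht).continuousAt.const_mul k).continuousWithinAt)
    Ioo_subset_Icc_self (closure_Ioo hab.ne).ge⟩

end Wronskian

namespace IsLinCaraSol

variable {a b c d : ℝ} {ω η u u' v v' : ℝ → ℝ}

theorem neg (hu : IsLinCaraSol a b ω u u') : IsLinCaraSol a b ω (-u) (-u') := by
  refine ⟨fun t ht => (hu.1 t ht).neg, ?_, fun t ht => ?_⟩
  · simpa only [Pi.neg_def, mul_neg] using hu.2.1.neg
  · simp only [Pi.neg_apply, mul_neg, intervalIntegral.integral_neg]
    linarith [hu.2.2 t ht]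

theorem mono (hu : IsLinCaraSol c d ω u u') (hca : c ≤ a) (hab : a ≤ b) (hbd : b ≤ d) :
    IsLinCaraSol a b ω u u' := by
  have hcd : c ≤ d := hca.trans (hab.trans hbd)
  have hint : ∀ x ∈ Icc c d, ∀ y ∈ Icc c d,
      IntervalIntegrable (fun s => ω s * u s) volume x y := fun x hx y hy =>
    hu.2.1.mono_set (uIcc_subset_uIcc (Icc_subset_uIcc hx) (Icc_subset_uIcc hy))
  have hc : c ∈ Icc c d := left_mem_Icc.2 hcd
  have ha : a ∈ Icc c d := ⟨hca, hab.trans hbd⟩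
  refine ⟨fun t ht => hu.1 t (Icc_subset_Icc hca hbd ht),
    hint a ha b ⟨hca.trans hab, hbd⟩, fun t ht => ?_⟩
  have htI : t ∈ Icc c d := Icc_subset_Icc hca hbd ht
  rw [hu.2.2 t htI, hu.2.2 a ha,
    ← intervalIntegral.integral_add_adjacent_intervals (hint c hc a ha) (hint a ha t htI)]
  ring

theorem continuousOn (hu : IsLinCaraSol a b ω u u') : ContinuousOn u (Icc a b) :=
  fun t ht => (hu.1 t ht).continuousAt.continuousWithinAt

theorem absolutelyContinuousOnInterval_deriv (hu : IsLinCaraSol a b ω u u') (hab : a ≤ b) :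
    AbsolutelyContinuousOnInterval u' a b := by
  have hconst : AbsolutelyContinuousOnInterval (fun _ => u' a) a b :=
    contDiffOn_const.absolutelyContinuousOnInterval
  refine absolutelyContinuousOnInterval_congr (hconst.fun_sub
    (hu.2.1.absolutelyContinuousOnInterval_intervalIntegral left_mem_uIcc)) fun t ht => ?_
  exact (hu.2.2 t (uIcc_of_le hab ▸ ht)).symm

theorem absolutelyContinuousOnInterval (hu : IsLinCaraSol a b ω u u') (hab : a ≤ b) :
    AbsolutelyContinuousOnInterval u a b :=
  absolutelyContinuousOnInterval_of_hasDerivWithinAt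
    (fun t ht => (hu.1 t (uIcc_of_le hab ▸ ht)).hasDerivWithinAt)
    (hu.absolutelyContinuousOnInterval_deriv hab).continuousOn

theorem ae_hasDerivAt_deriv (hu : IsLinCaraSol a b ω u u') :
    ∀ᵐ t, t ∈ Ioo a b → HasDerivAt u' (-(ω t * u t)) t := by
  filter_upwards [hu.2.1.ae_hasDerivAt_integral] with t ht htI
  refine ((ht (Icc_subset_uIcc (Ioo_subset_Icc_self htI)) a left_mem_uIcc).const_sub
    (u' a)).congr_of_eventuallyEq ?_
  filter_upwards [Ioo_mem_nhds htI.1 htI.2] with s hs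
  exact hu.2.2 s (Ioo_subset_Icc_self hs)

theorem absolutelyContinuousOnInterval_wronskian (hu : IsLinCaraSol a b ω u u')
    (hv : IsLinCaraSol a b η v v') (hab : a ≤ b) :
    AbsolutelyContinuousOnInterval (wronskian u u' v v') a b :=
  ((hu.absolutelyContinuousOnInterval hab).fun_mul
    (hv.absolutelyContinuousOnInterval_deriv hab)).fun_sub
    ((hu.absolutelyContinuousOnInterval_deriv hab).fun_mul (hv.absolutelyContinuousOnInterval hab))

theorem ae_hasDerivAt_wronskian (hu : IsLinCaraSol a b ω u u') (hv : IsLinCaraSol a b η v v') :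
    ∀ᵐ t, t ∈ Ioo a b →
      HasDerivAt (wronskian u u' v v') ((ω t - η t) * (u t * v t)) t := by
  filter_upwards [hu.ae_hasDerivAt_deriv, hv.ae_hasDerivAt_deriv] with t hu'' hv'' ht
  have htI := Ioo_subset_Icc_self ht
  exact (((hu.1 t htI).mul (hv'' ht)).sub ((hu'' ht).mul (hv.1 t htI))).congr_deriv (by ring)

theorem monotoneOn_wronskian (hu : IsLinCaraSol a b ω u u') (hv : IsLinCaraSol a b η v v')
    (hab : a ≤ b) (hle : ∀ᵐ t, t ∈ Ioo a b → η t ≤ ω t)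
    (huv : ∀ t ∈ Icc a b, 0 ≤ u t * v t) : MonotoneOn (wronskian u u' v v') (Icc a b) := by
  refine monotoneOn_of_ae_deriv_nonneg (hu.absolutelyContinuousOnInterval_wronskian hv hab) ?_
  filter_upwards [hu.ae_hasDerivAt_wronskian hv, hle] with t hderiv hωη ht
  rw [(hderiv ht).deriv]
  exact mul_nonneg (sub_nonneg.2 (hωη ht)) (huv t (Ioo_subset_Icc_self ht))

theorem wronskian_eq_zero_of_mul_nonneg (hu : IsLinCaraSol a b ω u u')
    (hv : IsLinCaraSol a b η v v') (hab : a < b) (hle : ∀ᵐ t, t ∈ Ioo a b → η t ≤ ω t)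
    (huv : ∀ t ∈ Icc a b, 0 ≤ u t * v t) (ha : v a = 0 ∨ wronskian u u' v v' a = 0)
    (hb : v b = 0 ∨ wronskian u u' v v' b = 0) :
    ∀ t ∈ Icc a b, wronskian u u' v v' t = 0 := by
  intro t ht
  have haI : a ∈ Icc a b := left_mem_Icc.2 hab.le
  have hbI : b ∈ Icc a b := right_mem_Icc.2 hab.le
  have hmono := hu.monotoneOn_wronskian hv hab.le hle huv
  have hWa : 0 ≤ wronskian u u' v v' a :=
    ha.elim (wronskian_left_nonneg_of_mul_nonneg hab (hu.1 a haI) (hv.1 a haI) huv) Eq.ge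
  have hWb : wronskian u u' v v' b ≤ 0 :=
    hb.elim (wronskian_right_nonpos_of_mul_nonneg hab (hu.1 b hbI) (hv.1 b hbI) huv) Eq.le
  exact le_antisymm ((hmono ht hbI ht.2).trans hWb) (hWa.trans (hmono haI ht ht.1))

theorem wronskian_eq_zero (hu : IsLinCaraSol a b ω u u') (hv : IsLinCaraSol a b η v v')
    (hab : a < b) (hle : ∀ᵐ t, t ∈ Ioo a b → η t ≤ ω t) (hu0 : ∀ t ∈ Ioo a b, u t ≠ 0)
    (hv0 : ∀ t ∈ Ioo a b, v t ≠ 0) (ha : v a = 0 ∨ wronskian u u' v v' a = 0)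
    (hb : v b = 0 ∨ wronskian u u' v v' b = 0) :
    ∀ t ∈ Icc a b, wronskian u u' v v' t = 0 := by
  have hcont : ContinuousOn (fun t => u t * v t) (Icc a b) := hu.continuousOn.mul hv.continuousOn
  have hclosure : closure (Ioo a b) = Icc a b := closure_Ioo hab.ne
  rcases forall_pos_or_forall_neg_of_isPreconnected isPreconnected_Ioo
    (hcont.mono Ioo_subset_Icc_self) (fun t ht => mul_ne_zero (hu0 t ht) (hv0 t ht))
    with hpos | hneg
  · refine hu.wronskian_eq_zero_of_mul_nonneg hv hab hle (fun t ht => ?_) ha hb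
    exact le_on_closure (fun s hs => (hpos s hs).le) continuousOn_const (hclosure ▸ hcont)
      (hclosure ▸ ht)
  · have hnonpos : ∀ t ∈ Icc a b, u t * v t ≤ 0 := fun t ht =>
      le_on_closure (fun s hs => (hneg s hs).le) (hclosure ▸ hcont) continuousOn_const
        (hclosure ▸ ht)
    have hW := hu.neg.wronskian_eq_zero_of_mul_nonneg hv hab hle
      (fun t ht => by simpa using hnonpos t ht) (by simpa [wronskian_neg_left] using ha)
      (by simpa [wronskian_neg_left] using hb)
    simpa [wronskian_neg_left] using hW

theorem ae_eq_of_wronskian_eq_zero (hu : IsLinCaraSol a b ω u u') (hv : IsLinCaraSol a b η v v')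
    (hu0 : ∀ t ∈ Ioo a b, u t ≠ 0) (hv0 : ∀ t ∈ Ioo a b, v t ≠ 0)
    (hW : ∀ t ∈ Ioo a b, wronskian u u' v v' t = 0) :
    ∀ᵐ t, t ∈ Ioo a b → η t = ω t := by
  filter_upwards [hu.ae_hasDerivAt_wronskian hv] with t hderiv ht
  have hW' : HasDerivAt (wronskian u u' v v') 0 t :=
    (hasDerivAt_const t 0).congr_of_eventuallyEq
      (eventually_of_mem (isOpen_Ioo.mem_nhds ht) hW)
  have hprod : (ω t - η t) * (u t * v t) = 0 := (hderiv ht).unique hW'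
  exact (sub_eq_zero.1 ((mul_eq_zero_iff_right
    (mul_ne_zero (hu0 t ht) (hv0 t ht))).1 hprod)).symm

theorem forall_ne_zero_of_forall_ne_zero (hu : IsLinCaraSol c d ω u u')
    (hv : IsLinCaraSol c d η v v') (hcd : c < d) (hle : ∀ᵐ t, t ∈ Ioo c d → η t ≤ ω t)
    (hu0 : ∀ t ∈ Ioo c d, u t ≠ 0) (hvne : ∃ t ∈ Icc c d, v t ≠ 0)
    (hc : v c = 0 ∨ wronskian u u' v v' c = 0) (hd : v d = 0 ∨ wronskian u u' v v' d = 0) :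
    ∀ t ∈ Ioo c d, v t ≠ 0 := by
  obtain ⟨s, hs, hvs⟩ := exists_mem_Ioo_ne_of_exists_mem_Icc_ne hcd.ne hv.continuousOn hvne
  obtain ⟨a, b, hsab, hca, hbd, hva, hvb, hv0⟩ :=
    exists_maximal_Ioo_forall_ne hv.continuousOn hs hvs
  have hab : a < b := hsab.1.trans hsab.2
  have hsub : Ioo a b ⊆ Ioo c d := Ioo_subset_Ioo hca hbd
  have huab := hu.mono hca hab.le hbd
  have hvab := hv.mono hca hab.le hbd
  have hW : ∀ t ∈ Icc a b, wronskian u u' v v' t = 0 :=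
    huab.wronskian_eq_zero hvab hab (hle.mono fun t h ht => h (hsub ht))
      (fun t ht => hu0 t (hsub ht)) hv0 (hva.elim (fun h => h ▸ hc) .inl)
      (hvb.elim (fun h => h ▸ hd) .inl)
  obtain ⟨k, hk⟩ := exists_eqOn_const_mul_of_wronskian_eq_zero hab huab.1 hvab.1 hv0
    fun t ht => hW t (Ioo_subset_Icc_self ht)
  have hzero : ∀ p ∈ Icc a b, v p = 0 → p ∉ Ioo c d := fun p hp hvp hpI =>
    hu0 p hpI (by simp [hk hp, hvp])
  have hac : a = c := hva.elim id fun hva0 => (hca.eq_of_not_lt fun hlt =>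
    hzero a (left_mem_Icc.2 hab.le) hva0 ⟨hlt, hab.trans_le hbd⟩).symm
  have hbd' : b = d := hvb.elim id fun hvb0 => hbd.eq_of_not_lt fun hlt =>
    hzero b (right_mem_Icc.2 hab.le) hvb0 ⟨hca.trans_lt hab, hlt⟩
  rwa [hac, hbd'] at hv0

end IsLinCaraSol

theorem sturm_comparison_general {c d : ℝ} (hcd : c < d) {ω₁ ω₂ : ℝ → ℝ}
    (hle : ∀ᵐ t ∂(volume.restrict (Icc c d)), ω₁ t ≤ ω₂ t)
    (hlt : 0 < volume {t ∈ Icc c d | ω₁ t < ω₂ t}) {u₁ u₁' u₂ u₂' : ℝ → ℝ}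
    (hsol₁ : IsLinCaraSol c d ω₁ u₁ u₁') (hsol₂ : IsLinCaraSol c d ω₂ u₂ u₂')
    (hnt₁ : ∃ t ∈ Icc c d, u₁ t ≠ 0) (hc : u₁ c = 0 ∨ wronskian u₂ u₂' u₁ u₁' c = 0)
    (hd : u₁ d = 0 ∨ wronskian u₂ u₂' u₁ u₁' d = 0) :
    ∃ t ∈ Ioo c d, u₂ t = 0 := by
  by_contra! hu₂
  rw [← restrict_Ioo_eq_restrict_Icc, ae_restrict_iff' measurableSet_Ioo] at hle
  have hu₁ : ∀ t ∈ Ioo c d, u₁ t ≠ 0 :=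
    hsol₂.forall_ne_zero_of_forall_ne_zero hsol₁ hcd hle hu₂ hnt₁ hc hd
  have hW : ∀ t ∈ Icc c d, wronskian u₂ u₂' u₁ u₁' t = 0 :=
    hsol₂.wronskian_eq_zero hsol₁ hcd hle hu₂ hu₁ hc hd
  have heq : ∀ᵐ t, t ∈ Ioo c d → ω₁ t = ω₂ t :=
    hsol₂.ae_eq_of_wronskian_eq_zero hsol₁ hu₂ hu₁ fun t ht => hW t (Ioo_subset_Icc_self ht)
  rw [← ae_restrict_iff' measurableSet_Ioo, restrict_Ioo_eq_restrict_Icc,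
    ae_restrict_iff' measurableSet_Icc] at heq
  have hsub : {t ∈ Icc c d | ω₁ t < ω₂ t} ⊆ {t | ¬(t ∈ Icc c d → ω₁ t = ω₂ t)} :=
    fun t ht h => ht.2.ne (h ht.1)
  exact hlt.ne' (measure_mono_null hsub (ae_iff.1 heq))

/-- **Sturm comparison theorem with `L¹` coefficients.**
If `ω₁ ≤ ω₂` a.e. on `[c,d]` with strict inequality on a set of positive measure,
`u₁, u₂` are nontrivial solutions of `uᵢ'' + ωᵢ uᵢ = 0`, and either
`u₁(c) = 0 = u₁(d)`, or `u₁'(c) = 0 = u₁(d)` and `u₂'(c) = 0`, then `u₂` vanishes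
somewhere in `(c,d)`. -/
theorem sturm_comparison
    (c d : ℝ) (hcd : c < d)
    (ω₁ ω₂ : ℝ → ℝ)
    (hω₁ : IntegrableOn ω₁ (Set.Icc c d))
    (hω₂ : IntegrableOn ω₂ (Set.Icc c d))
    (hle : ∀ᵐ t ∂(volume.restrict (Set.Icc c d)), ω₁ t ≤ ω₂ t)
    (hlt : 0 < volume {t ∈ Set.Icc c d | ω₁ t < ω₂ t})
    (u₁ u₁' u₂ u₂' : ℝ → ℝ)
    (hsol₁ : IsLinCaraSol c d ω₁ u₁ u₁')
    (hsol₂ : IsLinCaraSol c d ω₂ u₂ u₂')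
    (hnt₁ : ∃ t ∈ Set.Icc c d, u₁ t ≠ 0)
    (hnt₂ : ∃ t ∈ Set.Icc c d, u₂ t ≠ 0)
    (hbc : (u₁ c = 0 ∧ u₁ d = 0) ∨ (u₁' c = 0 ∧ u₁ d = 0 ∧ u₂' c = 0)) :
    ∃ t ∈ Set.Ioo c d, u₂ t = 0 := by
  refine sturm_comparison_general hcd hle hlt hsol₁ hsol₂ hnt₁ ?_
    (.inl (hbc.elim And.right (·.2.1)))
  exact hbc.imp And.left fun ⟨hu₁', _, hu₂'⟩ => by simp [wronskian, hu₁', hu₂']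
end

section
/- (Symmetry of positive solutions.) Let a<b, c := (a+b)/2, let g ∈ C¹([0,∞),[0,∞)) satisfy (g₊), and let q ∈ L¹([a,b]) be such that q ≥ 0 a.e., q ≢ 0, q(t) = q(a+b−t) for a.e. t ∈ [a,b], and q is non-decreasing on [a,c]. Then every positive solution u of the Dirichlet problem u'' + q(t) g(u) = 0, u(a) = 0 = u(b), is symmetric, i.e. u(t) = u(a+b−t) for every t ∈ [a,b], and is non-decreasing on [a,c]. -/
open Set MeasureTheory Filter Topology

/-!
Let `c` be the midpoint and let `v t = u (a + b - t)` be the reflected solution; up to exchanging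
`u` and `v`, suppose `u' c ≥ 0`. On an interval `[s, t] ⊆ [a, c]` on which `u ≤ v`, with equality at
`t`, the energy identity `(u' ^ 2)' = -2 q (G ∘ u)'`, where `G' = g`, together with the monotonicity
of `q`, shows that `v' ^ 2 - u' ^ 2` is at most its value at `t`. Concavity makes `u' ≥ 0` on
`[a, c]` and gives `|v' t| ≤ u' t`, so `v - u` is nonincreasing on `[s, t]` and cannot become
positive there if it also vanishes at `s`. Hence `v ≤ u` on `[a, c]`, which forces `u' c ≤ 0`, so
`u' c = 0` and the argument applies with `u` and `v` exchanged.
-/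

section RealFunctions

variable {a b : ℝ} {f h p : ℝ → ℝ}

lemma hasDerivWithinAt_nonpos_of_isMinOn_Icc_right {f' : ℝ} (hab : a < b)
    (hf : HasDerivWithinAt f f' (Icc a b) b) (hmin : IsMinOn f (Icc a b) b) : f' ≤ 0 := by
  have hcone : a - b ∈ posTangentConeAt (Icc a b) b :=
    sub_mem_posTangentConeAt_of_segment_subset <|
      (convex_Icc a b).segment_subset (right_mem_Icc.2 hab.le) (left_mem_Icc.2 hab.le)
  have hnonneg : 0 ≤ (a - b) * f' := by
    simpa using hmin.localize.hasFDerivWithinAt_nonneg hf.hasFDerivWithinAt hcone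
  exact nonpos_of_mul_nonneg_right hnonneg (sub_neg.2 hab)

lemma exists_zero_forall_Icc_nonneg_left (hab : a ≤ b) (hf : ContinuousOn f (Icc a b))
    (ha : f a ≤ 0) (hb : 0 ≤ f b) : ∃ s ∈ Icc a b, f s = 0 ∧ ∀ y ∈ Icc s b, 0 ≤ f y := by
  have hzero {r : ℝ} (hr : r ∈ Icc a b) (hfr : f r ≤ 0) : ∃ y ∈ Icc r b, f y = 0 :=
    intermediate_value_Icc hr.2 (hf.mono (Icc_subset_Icc_left hr.1)) ⟨hfr, hb⟩
  have hcompact : IsCompact (Icc a b ∩ f ⁻¹' {0}) :=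
    isCompact_Icc.of_isClosed_subset
      (hf.preimage_isClosed_of_isClosed isClosed_Icc isClosed_singleton) inter_subset_left
  obtain ⟨s, ⟨hs, hfs⟩, hmax⟩ := hcompact.exists_isGreatest (hzero (left_mem_Icc.2 hab) ha)
  refine ⟨s, hs, hfs, fun y hy => le_of_not_gt fun hneg => ?_⟩
  obtain ⟨z, hz, hfz⟩ := hzero ⟨hs.1.trans hy.1, hy.2⟩ hneg.le
  have hzs : z ≤ s := hmax ⟨⟨hs.1.trans (hy.1.trans hz.1), hz.2⟩, hfz⟩
  have hys : y = s := le_antisymm (hz.1.trans hzs) hy.1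
  exact hneg.ne (hys ▸ hfs)

lemma exists_zero_forall_Icc_nonneg_right (hab : a ≤ b) (hf : ContinuousOn f (Icc a b))
    (ha : 0 ≤ f a) (hb : f b ≤ 0) : ∃ t ∈ Icc a b, f t = 0 ∧ ∀ y ∈ Icc a t, 0 ≤ f y := by
  obtain ⟨s, hs, hfs, hpos⟩ := exists_zero_forall_Icc_nonneg_left (f := fun x => f (-x))
    (neg_le_neg hab)
    (hf.comp continuous_neg.continuousOn fun x hx => ⟨le_neg.2 hx.2, neg_le.1 hx.1⟩)
    (by simpa using hb) (by simpa using ha)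
  refine ⟨-s, ⟨le_neg.2 hs.2, neg_le.1 hs.1⟩, hfs, fun y hy => ?_⟩
  simpa using hpos (-y) ⟨le_neg.2 hy.2, neg_le_neg hy.1⟩

lemma exists_zeros_forall_Icc_nonneg {x : ℝ} (hx : x ∈ Icc a b) (hf : ContinuousOn f (Icc a b))
    (ha : f a ≤ 0) (hfx : 0 ≤ f x) (hb : f b ≤ 0) :
    ∃ s ∈ Icc a x, ∃ t ∈ Icc x b, f s = 0 ∧ f t = 0 ∧ ∀ y ∈ Icc s t, 0 ≤ f y := by
  obtain ⟨s, hs, hfs, hleft⟩ := exists_zero_forall_Icc_nonneg_left hx.1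
    (hf.mono (Icc_subset_Icc_right hx.2)) ha hfx
  obtain ⟨t, ht, hft, hright⟩ := exists_zero_forall_Icc_nonneg_right hx.2
    (hf.mono (Icc_subset_Icc_left hx.1)) hfx hb
  exact ⟨s, hs, t, ht, hfs, hft, fun y hy =>
    (le_total y x).elim (fun hyx => hleft y ⟨hy.1, hyx⟩) fun hxy => hright y ⟨hxy, hy.2⟩⟩

lemma setIntegral_nonneg_of_forall_integral_nonneg {S : Set ℝ} (hSsub : S ⊆ Ioc a b)
    (hS : ∀ x ∈ S, ∀ y ∈ Ioc a b, x ≤ y → y ∈ S)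
    (hh : ∀ r ∈ Icc a b, 0 ≤ ∫ x in r..b, h x) : 0 ≤ ∫ x in S, h x := by
  rcases S.eq_empty_or_nonempty with rfl | hne
  · simp
  have hbdd : BddBelow S := ⟨a, fun x hx => (hSsub hx).1.le⟩
  have har : a ≤ sInf S := le_csInf hne fun x hx => (hSsub hx).1.le
  have hrb : sInf S ≤ b := (csInf_le hbdd hne.some_mem).trans (hSsub hne.some_mem).2
  have hle : Ioc (sInf S) b ⊆ S := fun y hy =>
    have ⟨x, hx, hxy⟩ := exists_lt_of_csInf_lt hne hy.1
    hS x hx y ⟨har.trans_lt hy.1, hy.2⟩ hxy.le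
  have hge : S ⊆ Icc (sInf S) b := fun x hx => ⟨csInf_le hbdd hx, (hSsub hx).2⟩
  have hae : S =ᵐ[volume] Ioc (sInf S) b :=
    (hge.eventuallyLE.trans Ioc_ae_eq_Icc.symm.le).antisymm hle.eventuallyLE
  rw [setIntegral_congr_set hae, ← intervalIntegral.integral_of_le hrb]
  exact hh _ ⟨har, hrb⟩

lemma integral_indicator_Iio_eq_mul {y M : ℝ} (hy : 0 ≤ y) (hyM : y ≤ M) (k : ℝ) :
    ∫ l in Ioc 0 M, (Iio y).indicator (fun _ => k) l = y * k := by
  have hinter : Ioc 0 M ∩ Iio y = Ioo 0 y := by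
    ext l
    simp only [mem_inter_iff, mem_Ioc, mem_Iio, mem_Ioo]
    exact ⟨fun hl => ⟨hl.1.1, hl.2⟩, fun hl => ⟨⟨hl.1, hl.2.le.trans hyM⟩, hl.2⟩⟩
  rw [setIntegral_indicator measurableSet_Iio, hinter, setIntegral_const,
    Real.volume_real_Ioo_of_le hy, sub_zero, smul_eq_mul]

/-- The superlevel set of `p` at height `l` inside `(a, b]`, for the layer cake formula. Half-open as
in the definition of `∫ x in a..b`. -/
def superlevelOn (a b : ℝ) (p : ℝ → ℝ) (l : ℝ) : Set ℝ := {x ∈ Ioc a b | l < p x}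

lemma measurableSet_superlevelOn (hp : MonotoneOn p (Ioc a b)) (l : ℝ) :
    MeasurableSet (superlevelOn a b p l) := by
  refine OrdConnected.measurableSet ⟨fun x hx y hy z hz => ?_⟩
  have hzab : z ∈ Ioc a b := ⟨hx.1.1.trans_le hz.1, hz.2.trans hy.1.2⟩
  exact ⟨hzab, hx.2.trans_le (hp hx.1 hzab hz.1)⟩

lemma integrable_indicator_superlevelOn (hp : MonotoneOn p (Ioc a b))
    (hh : IntegrableOn h (Ioc a b)) (M : ℝ) :
    Integrable (Function.uncurry fun x l => (superlevelOn a b p l).indicator h x)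
      ((volume.restrict (Ioc a b)).prod (volume.restrict (Ioc 0 M))) := by
  have hp_meas : AEMeasurable p (volume.restrict (Ioc a b)) :=
    aemeasurable_restrict_of_monotoneOn measurableSet_Ioc hp
  have hset : NullMeasurableSet {z : ℝ × ℝ | z.1 ∈ Ioc a b ∧ z.2 < p z.1}
      ((volume.restrict (Ioc a b)).prod (volume.restrict (Ioc 0 M))) :=
    (measurable_fst measurableSet_Ioc).nullMeasurableSet.inter
      (nullMeasurableSet_lt measurable_snd.aemeasurable hp_meas.comp_fst)
  exact (hh.integrable.comp_fst (volume.restrict (Ioc 0 M))).indicator₀ hset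

-- By the layer cake formula for `p`, the integral of `p * h` is an average of integrals of `h` over
-- superlevel sets of `p`, which are intervals ending at `b`.
lemma integral_mul_nonneg_of_monotoneOn (hab : a ≤ b) (hp : MonotoneOn p (Ioc a b))
    (hp0 : ∀ᵐ x ∂volume.restrict (Ioc a b), 0 ≤ p x) (hh_int : IntervalIntegrable h volume a b)
    (hh : ∀ r ∈ Icc a b, 0 ≤ ∫ x in r..b, h x) : 0 ≤ ∫ x in a..b, p x * h x := by
  have hlayer : ∀ᵐ x ∂volume.restrict (Ioc a b),
      p x * h x = ∫ l in Ioc 0 (p b), (superlevelOn a b p l).indicator h x := by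
    filter_upwards [hp0, ae_restrict_mem measurableSet_Ioc] with x hpx hx
    have hpb : p x ≤ p b := hp hx ⟨hx.1.trans_le hx.2, le_rfl⟩ hx.2
    rw [← integral_indicator_Iio_eq_mul hpx hpb]
    refine integral_congr_ae (Eventually.of_forall fun l => ?_)
    simp only [indicator, superlevelOn, mem_Iio, mem_ofPred_eq, hx, true_and]
  have hlevel (l : ℝ) : 0 ≤ ∫ x in Ioc a b, (superlevelOn a b p l).indicator h x := by
    have hsub : superlevelOn a b p l ⊆ Ioc a b := fun x hx => hx.1
    rw [setIntegral_indicator (measurableSet_superlevelOn hp l), inter_eq_right.2 hsub]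
    exact setIntegral_nonneg_of_forall_integral_nonneg hsub
      (fun x hx y hy hxy => ⟨hy, hx.2.trans_le (hp hx.1 hy hxy)⟩) hh
  rw [intervalIntegral.integral_of_le hab, integral_congr_ae hlayer, integral_integral_swap
    (integrable_indicator_superlevelOn hp (hh_int.1) (p b))]
  exact integral_nonneg hlevel

lemma continuous_of_continuousOn_Ici_of_eq_zero {g : ℝ → ℝ} (hg : ContinuousOn g (Ici 0))
    (hg_ext : ∀ s ≤ (0 : ℝ), g s = 0) : Continuous g := by
  have hmax : g = fun s => g (max s 0) := by
    funext s
    rcases le_total s 0 with hs | hs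
    · rw [max_eq_right hs, hg_ext s hs, hg_ext 0 le_rfl]
    · rw [max_eq_left hs]
  rw [hmax]
  exact hg.comp_continuous (continuous_id.max continuous_const) fun s => le_max_right s 0

end RealFunctions

namespace IsCaraSol

section General

variable {a b : ℝ} {F : ℝ → ℝ → ℝ} {u u' : ℝ → ℝ}

lemma continuousOn (hu : IsCaraSol a b F u u') : ContinuousOn u (Icc a b) :=
  fun t ht => (hu.1 t ht).continuousAt.continuousWithinAt

lemma intervalIntegrable (hu : IsCaraSol a b F u u') {s t : ℝ} (hs : s ∈ Icc a b)
    (ht : t ∈ Icc a b) : IntervalIntegrable (fun x => F x (u x)) volume s t :=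
  hu.2.1.mono_set (by rw [uIcc_of_le (hs.1.trans hs.2)]; exact uIcc_subset_Icc hs ht)

lemma deriv_eq_sub_integral (hu : IsCaraSol a b F u u') {s t : ℝ} (hs : s ∈ Icc a b)
    (ht : t ∈ Icc a b) : u' t = u' s - ∫ x in s..t, F x (u x) := by
  have ha : a ∈ Icc a b := left_mem_Icc.2 (hs.1.trans hs.2)
  linarith [hu.2.2 s hs, hu.2.2 t ht, intervalIntegral.integral_add_adjacent_intervals
    (hu.intervalIntegrable ha hs) (hu.intervalIntegrable hs ht)]

lemma mono (hu : IsCaraSol a b F u u') {s t : ℝ} (hs : s ∈ Icc a b) (ht : t ∈ Icc a b) :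
    IsCaraSol s t F u u' :=
  ⟨fun x hx => hu.1 x (Icc_subset_Icc hs.1 ht.2 hx), hu.intervalIntegrable hs ht,
    fun _ hx => hu.deriv_eq_sub_integral hs (Icc_subset_Icc hs.1 ht.2 hx)⟩

lemma continuousOn_deriv (hu : IsCaraSol a b F u u') : ContinuousOn u' (Icc a b) :=
  (continuousOn_const.sub
    ((intervalIntegral.continuousOn_primitive_interval' hu.2.1 left_mem_uIcc).mono
      Icc_subset_uIcc)).congr hu.2.2

lemma antitoneOn_deriv_s6 (hu : IsCaraSol a b F u u')
    (hF : ∀ᵐ t ∂volume.restrict (Icc a b), 0 ≤ F t (u t)) : AntitoneOn u' (Icc a b) := by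
  intro s hs t ht hst
  have hnonneg : 0 ≤ ∫ x in s..t, F x (u x) :=
    intervalIntegral.integral_nonneg_of_ae_restrict hst
      (ae_restrict_of_ae_restrict_of_subset (Icc_subset_Icc hs.1 ht.2) hF)
  linarith [hu.deriv_eq_sub_integral hs ht]

lemma monotoneOn_of_deriv_nonneg (hu : IsCaraSol a b F u u') (hpos : ∀ t ∈ Icc a b, 0 ≤ u' t) :
    MonotoneOn u (Icc a b) :=
  monotoneOn_of_hasDerivWithinAt_nonneg (convex_Icc a b) hu.continuousOn
    (fun t ht => (hu.1 t (interior_subset ht)).hasDerivWithinAt)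
    fun t ht => hpos t (interior_subset ht)

lemma sq_deriv_sub_sq_deriv (hab : a ≤ b) (hu : IsCaraSol a b F u u') :
    u' b ^ 2 - u' a ^ 2 = -2 * ∫ x in a..b, F x (u x) * u' x := by
  set φ : ℝ → ℝ := fun t => u' a - ∫ x in a..t, F x (u x)
  have hφu : ∀ t ∈ Icc a b, φ t = u' t := fun t ht => (hu.2.2 t ht).symm
  have hφ_ac : AbsolutelyContinuousOnInterval φ a b :=
    contDiffOn_const.absolutelyContinuousOnInterval.fun_sub
      (hu.2.1.absolutelyContinuousOnInterval_intervalIntegral left_mem_uIcc)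
  have hparts := hφ_ac.integral_deriv_mul_eq_sub hφ_ac
  rw [hφu a (left_mem_Icc.2 hab), hφu b (right_mem_Icc.2 hab)] at hparts
  calc u' b ^ 2 - u' a ^ 2 = ∫ x in a..b, deriv φ x * φ x + φ x * deriv φ x := by
        rw [hparts]; ring
    _ = ∫ x in a..b, -2 * (F x (u x) * u' x) := by
        refine intervalIntegral.integral_congr_ae ?_
        filter_upwards [hu.2.1.ae_hasDerivAt_integral] with x hx hxab
        have hx_mem := uIoc_subset_uIcc hxab
        rw [((hx hx_mem a left_mem_uIcc).const_sub (u' a)).deriv,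
          hφu x (by rwa [uIcc_of_le hab] at hx_mem)]
        ring
    _ = -2 * ∫ x in a..b, F x (u x) * u' x := intervalIntegral.integral_const_mul _ _

lemma reflect (hab : a ≤ b) (hu : IsCaraSol a b F u u')
    (hF : ∀ᵐ t ∂volume.restrict (Icc a b), ∀ x, F t x = F (a + b - t) x) :
    IsCaraSol a b F (fun t => u (a + b - t)) fun t => -u' (a + b - t) := by
  have hmem {t : ℝ} (ht : t ∈ Icc a b) : a + b - t ∈ Icc a b :=
    ⟨by linarith [ht.2], by linarith [ht.1]⟩
  have hF' {t : ℝ} (ht : t ∈ Icc a b) : ∀ᵐ s, s ∈ uIoc a t →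
      F (a + b - s) (u (a + b - s)) = F s (u (a + b - s)) := by
    filter_upwards [(ae_restrict_iff' measurableSet_Icc).1 hF] with s hs hst
    rw [uIoc_of_le ht.1] at hst
    exact (hs ⟨hst.1.le, hst.2.trans ht.2⟩ _).symm
  refine ⟨fun t ht => ?_, ?_, fun t ht => ?_⟩
  · simpa using (hu.1 _ (hmem ht)).comp_const_sub (a + b) t
  · have hint := (hu.2.1.comp_sub_left (a + b)).symm
    simp only [add_sub_cancel_left, add_sub_cancel_right] at hint
    exact hint.congr_ae ((ae_restrict_iff' measurableSet_uIoc).2 (hF' (right_mem_Icc.2 hab)))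
  · simp only [hu.deriv_eq_sub_integral (hmem ht) (hmem (left_mem_Icc.2 hab))]
    rw [← intervalIntegral.integral_congr_ae (hF' ht),
      intervalIntegral.integral_comp_sub_left (fun s => F s (u s))]
    ring

end General

section Comparison

variable {a b : ℝ} {q g u u' v v' : ℝ → ℝ}

lemma intervalIntegrable_comp_mul_deriv {F : ℝ → ℝ → ℝ} (hab : a ≤ b) (hg : Continuous g)
    (hu : IsCaraSol a b F u u') : IntervalIntegrable (fun x => g (u x) * u' x) volume a b :=
  ((hg.comp_continuousOn hu.continuousOn).mul
    hu.continuousOn_deriv).intervalIntegrable_of_Icc hab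

lemma integral_comp_mul_deriv {F : ℝ → ℝ → ℝ} (hab : a ≤ b) (hg : Continuous g)
    (hu : IsCaraSol a b F u u') : ∫ x in a..b, g (u x) * u' x = ∫ y in u a..u b, g y :=
  intervalIntegral.integral_comp_mul_deriv (fun x hx => hu.1 x (uIcc_of_le hab ▸ hx))
    (by rw [uIcc_of_le hab]; exact hu.continuousOn_deriv) hg

lemma integral_comp_mul_deriv_sub_nonneg {F : ℝ → ℝ → ℝ} (hab : a ≤ b) (hg : Continuous g)
    (hg0 : ∀ x, 0 ≤ g x) (hu : IsCaraSol a b F u u') (hv : IsCaraSol a b F v v')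
    (huv_a : u a ≤ v a) (huv_b : u b = v b) :
    0 ≤ ∫ x in a..b, (g (u x) * u' x - g (v x) * v' x) := by
  calc 0 ≤ ∫ y in u a..v a, g y := intervalIntegral.integral_nonneg huv_a fun y _ => hg0 y
    _ = (∫ y in u a..u b, g y) - ∫ y in v a..v b, g y := by
        rw [huv_b]
        exact eq_sub_of_add_eq <| intervalIntegral.integral_add_adjacent_intervals
          (hg.intervalIntegrable _ _) (hg.intervalIntegrable _ _)
    _ = ∫ x in a..b, (g (u x) * u' x - g (v x) * v' x) := by
        rw [intervalIntegral.integral_sub (intervalIntegrable_comp_mul_deriv hab hg hu)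
          (intervalIntegrable_comp_mul_deriv hab hg hv), integral_comp_mul_deriv hab hg hu,
          integral_comp_mul_deriv hab hg hv]

lemma sq_deriv_sub_sq_deriv_le (hab : a ≤ b) (hg : Continuous g) (hg0 : ∀ x, 0 ≤ g x)
    (hq_mono : MonotoneOn q (Icc a b)) (hq_nonneg : ∀ᵐ t ∂volume.restrict (Icc a b), 0 ≤ q t)
    (hu : IsCaraSol a b (fun s x => q s * g x) u u')
    (hv : IsCaraSol a b (fun s x => q s * g x) v v')
    (huv : ∀ t ∈ Icc a b, u t ≤ v t) (huv_b : u b = v b) :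
    v' a ^ 2 - u' a ^ 2 ≤ v' b ^ 2 - u' b ^ 2 := by
  have hmul_int {w w' : ℝ → ℝ} (hw : IsCaraSol a b (fun s x => q s * g x) w w') :
      IntervalIntegrable (fun x => q x * g (w x) * w' x) volume a b :=
    hw.2.1.mul_continuousOn (by rw [uIcc_of_le hab]; exact hw.continuousOn_deriv)
  have hnonneg : 0 ≤ ∫ x in a..b, q x * (g (u x) * u' x - g (v x) * v' x) :=
    integral_mul_nonneg_of_monotoneOn hab (hq_mono.mono Ioc_subset_Icc_self)
      (ae_restrict_of_ae_restrict_of_subset Ioc_subset_Icc_self hq_nonneg)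
      ((intervalIntegrable_comp_mul_deriv hab hg hu).sub
        (intervalIntegrable_comp_mul_deriv hab hg hv))
      fun r hr => integral_comp_mul_deriv_sub_nonneg hr.2 hg hg0
        (hu.mono hr (right_mem_Icc.2 hab)) (hv.mono hr (right_mem_Icc.2 hab)) (huv r hr) huv_b
  have hsub : ∫ x in a..b, q x * (g (u x) * u' x - g (v x) * v' x) =
      (∫ x in a..b, q x * g (u x) * u' x) - ∫ x in a..b, q x * g (v x) * v' x := by
    rw [← intervalIntegral.integral_sub (hmul_int hu) (hmul_int hv)]
    simp only [mul_sub, mul_assoc]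
  linarith [hu.sq_deriv_sub_sq_deriv hab, hv.sq_deriv_sub_sq_deriv hab]

lemma antitoneOn_sub_of_le (hg : Continuous g) (hg0 : ∀ x, 0 ≤ g x)
    (hq_mono : MonotoneOn q (Icc a b)) (hq_nonneg : ∀ᵐ t ∂volume.restrict (Icc a b), 0 ≤ q t)
    (hu : IsCaraSol a b (fun s x => q s * g x) u u')
    (hv : IsCaraSol a b (fun s x => q s * g x) v v')
    (huv : ∀ t ∈ Icc a b, u t ≤ v t) (huv_b : u b = v b) (hb : |v' b| ≤ u' b) :
    AntitoneOn (fun t => v t - u t) (Icc a b) := by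
  have hderiv : ∀ s ∈ Icc a b, v' s ≤ u' s := fun s hs => by
    have hb_mem : b ∈ Icc a b := right_mem_Icc.2 (hs.1.trans hs.2)
    have hsub : Icc s b ⊆ Icc a b := Icc_subset_Icc_left hs.1
    have henergy : v' s ^ 2 - u' s ^ 2 ≤ v' b ^ 2 - u' b ^ 2 :=
      sq_deriv_sub_sq_deriv_le hs.2 hg hg0 (hq_mono.mono hsub)
        (ae_restrict_of_ae_restrict_of_subset hsub hq_nonneg) (hu.mono hs hb_mem)
        (hv.mono hs hb_mem) (fun t ht => huv t (hsub ht)) huv_b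
    have hus : 0 ≤ u' s := (abs_nonneg _).trans <| hb.trans <|
      hu.antitoneOn_deriv_s6 (hq_nonneg.mono fun t ht => mul_nonneg ht (hg0 _)) hs hb_mem hs.2
    have hsq_b : v' b ^ 2 ≤ u' b ^ 2 := sq_le_sq.2 (hb.trans (le_abs_self _))
    exact le_of_sq_le_sq (by linarith) hus
  exact antitoneOn_of_hasDerivWithinAt_nonpos (convex_Icc a b)
    (hv.continuousOn.sub hu.continuousOn)
    (fun t ht => ((hv.1 t (interior_subset ht)).sub
      (hu.1 t (interior_subset ht))).hasDerivWithinAt)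
    fun t ht => sub_nonpos.2 (hderiv t (interior_subset ht))

lemma le_of_abs_deriv_le (hg : Continuous g) (hg0 : ∀ x, 0 ≤ g x)
    (hq_mono : MonotoneOn q (Icc a b)) (hq_nonneg : ∀ᵐ t ∂volume.restrict (Icc a b), 0 ≤ q t)
    (hu : IsCaraSol a b (fun s x => q s * g x) u u')
    (hv : IsCaraSol a b (fun s x => q s * g x) v v')
    (hvu_a : v a ≤ u a) (huv_b : u b = v b) (hb : |v' b| ≤ u' b) :
    ∀ x ∈ Icc a b, v x ≤ u x := by
  intro x hx
  by_contra! hlt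
  obtain ⟨s, hs, t, ht, hws, hwt, hw_nonneg⟩ := exists_zeros_forall_Icc_nonneg
    (f := fun y => v y - u y) hx (hv.continuousOn.sub hu.continuousOn) (sub_nonpos.2 hvu_a)
    (sub_nonneg.2 hlt.le) (sub_nonpos.2 huv_b.ge)
  have hb_mem : b ∈ Icc a b := right_mem_Icc.2 (hx.1.trans hx.2)
  have hs_mem : s ∈ Icc a b := ⟨hs.1, hs.2.trans hx.2⟩
  have ht_mem : t ∈ Icc a b := ⟨hx.1.trans ht.1, ht.2⟩
  have hsub : Icc s t ⊆ Icc a b := Icc_subset_Icc hs.1 ht.2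
  have hst : s ≤ t := hs.2.trans ht.1
  have hsx : s < x := hs.2.lt_of_ne fun h => hlt.ne' (sub_eq_zero.1 (h ▸ hws))
  have hupper : v' t ≤ u' t := sub_nonpos.1 <|
    hasDerivWithinAt_nonpos_of_isMinOn_Icc_right (hsx.trans_le ht.1)
      ((hv.1 t ht_mem).sub (hu.1 t ht_mem)).hasDerivWithinAt
      fun y hy => hwt.trans_le (hw_nonneg y hy)
  have hlower : -u' t ≤ v' t := by
    have hvt : v' b ≤ v' t := hv.antitoneOn_deriv_s6
      (hq_nonneg.mono fun r hr => mul_nonneg hr (hg0 _)) ht_mem hb_mem ht.2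
    have hut : u' b ≤ u' t := hu.antitoneOn_deriv_s6
      (hq_nonneg.mono fun r hr => mul_nonneg hr (hg0 _)) ht_mem hb_mem ht.2
    linarith [neg_le_of_abs_le hb]
  have hanti := antitoneOn_sub_of_le hg hg0 (hq_mono.mono hsub)
    (ae_restrict_of_ae_restrict_of_subset hsub hq_nonneg) (hu.mono hs_mem ht_mem)
    (hv.mono hs_mem ht_mem) (fun y hy => sub_nonneg.1 (hw_nonneg y hy))
    (sub_eq_zero.1 hwt).symm (abs_le.2 ⟨hlower, hupper⟩)
  have hwx : v x - u x ≤ v s - u s := hanti (left_mem_Icc.2 hst) ⟨hs.2, ht.1⟩ hs.2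
  linarith

end Comparison

section Symmetry

variable {a b : ℝ} {q g u u' : ℝ → ℝ}

lemma reflect_le_of_deriv_midpoint_nonneg (hab : a ≤ b) (hg : Continuous g) (hg0 : ∀ x, 0 ≤ g x)
    (hq_nonneg : ∀ᵐ t ∂volume.restrict (Icc a b), 0 ≤ q t)
    (hq_symm : ∀ᵐ t ∂volume.restrict (Icc a b), q t = q (a + b - t))
    (hq_mono : MonotoneOn q (Icc a ((a + b) / 2)))
    (hu : IsCaraSol a b (fun s x => q s * g x) u u') (hends : u a = u b)
    (hmid : 0 ≤ u' ((a + b) / 2)) : ∀ t ∈ Icc a ((a + b) / 2), u (a + b - t) ≤ u t := by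
  have ha_mem : a ∈ Icc a b := left_mem_Icc.2 hab
  have hc_mem : (a + b) / 2 ∈ Icc a b := ⟨by linarith, by linarith⟩
  have hv := hu.reflect hab (hq_symm.mono fun t ht x => by rw [← ht])
  refine le_of_abs_deriv_le hg hg0 hq_mono
    (ae_restrict_of_ae_restrict_of_subset (Icc_subset_Icc_right hc_mem.2) hq_nonneg)
    (hu.mono ha_mem hc_mem) (hv.mono ha_mem hc_mem) ?_ ?_ ?_
  · rw [add_sub_cancel_left, hends]
  · rw [sub_half]
  · rw [sub_half, abs_neg, abs_of_nonneg hmid]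

lemma deriv_midpoint_nonpos (hab : a < b) (hg : Continuous g) (hg0 : ∀ x, 0 ≤ g x)
    (hq_nonneg : ∀ᵐ t ∂volume.restrict (Icc a b), 0 ≤ q t)
    (hq_symm : ∀ᵐ t ∂volume.restrict (Icc a b), q t = q (a + b - t))
    (hq_mono : MonotoneOn q (Icc a ((a + b) / 2)))
    (hu : IsCaraSol a b (fun s x => q s * g x) u u') (hends : u a = u b) :
    u' ((a + b) / 2) ≤ 0 := by
  by_contra! hmid
  have hle := hu.reflect_le_of_deriv_midpoint_nonneg hab.le hg hg0 hq_nonneg hq_symm hq_mono hends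
    hmid.le
  have hderiv := hu.1 ((a + b) / 2) ⟨by linarith, by linarith⟩
  have hderiv_sub : HasDerivAt (fun t => u t - u (a + b - t))
      (u' ((a + b) / 2) - -u' ((a + b) / 2)) ((a + b) / 2) :=
    hderiv.sub (HasDerivAt.comp_const_sub (a + b) _ ((sub_half (a + b)).symm ▸ hderiv))
  have hmin : IsMinOn (fun t => u t - u (a + b - t)) (Icc a ((a + b) / 2)) ((a + b) / 2) :=
    fun t ht => by simpa [sub_half] using hle t ht
  linarith [hasDerivWithinAt_nonpos_of_isMinOn_Icc_right (by linarith)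
    hderiv_sub.hasDerivWithinAt hmin]

lemma deriv_midpoint_eq_zero (hab : a < b) (hg : Continuous g) (hg0 : ∀ x, 0 ≤ g x)
    (hq_nonneg : ∀ᵐ t ∂volume.restrict (Icc a b), 0 ≤ q t)
    (hq_symm : ∀ᵐ t ∂volume.restrict (Icc a b), q t = q (a + b - t))
    (hq_mono : MonotoneOn q (Icc a ((a + b) / 2)))
    (hu : IsCaraSol a b (fun s x => q s * g x) u u') (hends : u a = u b) :
    u' ((a + b) / 2) = 0 := by
  refine le_antisymm (hu.deriv_midpoint_nonpos hab hg hg0 hq_nonneg hq_symm hq_mono hends) ?_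
  have hv := hu.reflect hab.le (hq_symm.mono fun t ht x => by rw [← ht])
  have hmid := hv.deriv_midpoint_nonpos hab hg hg0 hq_nonneg hq_symm hq_mono (by simp [hends])
  simpa [sub_half] using hmid

lemma eq_reflect (hab : a < b) (hg : Continuous g) (hg0 : ∀ x, 0 ≤ g x)
    (hq_nonneg : ∀ᵐ t ∂volume.restrict (Icc a b), 0 ≤ q t)
    (hq_symm : ∀ᵐ t ∂volume.restrict (Icc a b), q t = q (a + b - t))
    (hq_mono : MonotoneOn q (Icc a ((a + b) / 2)))
    (hu : IsCaraSol a b (fun s x => q s * g x) u u') (hends : u a = u b) :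
    ∀ t ∈ Icc a b, u t = u (a + b - t) := by
  have hmid := hu.deriv_midpoint_eq_zero hab hg hg0 hq_nonneg hq_symm hq_mono hends
  have hv := hu.reflect hab.le (hq_symm.mono fun t ht x => by rw [← ht])
  have hleft : ∀ t ∈ Icc a ((a + b) / 2), u t = u (a + b - t) := fun t ht => by
    refine le_antisymm ?_ (hu.reflect_le_of_deriv_midpoint_nonneg hab.le hg hg0 hq_nonneg hq_symm
      hq_mono hends hmid.ge t ht)
    simpa using hv.reflect_le_of_deriv_midpoint_nonneg hab.le hg hg0 hq_nonneg hq_symm hq_mono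
      (by simp [hends]) (by simp [sub_half, hmid]) t ht
  intro t ht
  rcases le_total t ((a + b) / 2) with htc | htc
  · exact hleft t ⟨ht.1, htc⟩
  · simpa using (hleft (a + b - t) ⟨by linarith [ht.2], by linarith⟩).symm

lemma monotoneOn_left_half (hab : a < b) (hg : Continuous g) (hg0 : ∀ x, 0 ≤ g x)
    (hq_nonneg : ∀ᵐ t ∂volume.restrict (Icc a b), 0 ≤ q t)
    (hq_symm : ∀ᵐ t ∂volume.restrict (Icc a b), q t = q (a + b - t))
    (hq_mono : MonotoneOn q (Icc a ((a + b) / 2)))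
    (hu : IsCaraSol a b (fun s x => q s * g x) u u') (hends : u a = u b) :
    MonotoneOn u (Icc a ((a + b) / 2)) := by
  have hc_mem : (a + b) / 2 ∈ Icc a b := ⟨by linarith, by linarith⟩
  refine (hu.mono (left_mem_Icc.2 hab.le) hc_mem).monotoneOn_of_deriv_nonneg fun t ht => ?_
  rw [← hu.deriv_midpoint_eq_zero hab hg hg0 hq_nonneg hq_symm hq_mono hends]
  exact hu.antitoneOn_deriv_s6 (hq_nonneg.mono fun r hr => mul_nonneg hr (hg0 _))
    ⟨ht.1, ht.2.trans hc_mem.2⟩ hc_mem ht.2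

end Symmetry

end IsCaraSol

theorem symmetry_of_positive_solutions_general {a b : ℝ} (hab : a < b) {g : ℝ → ℝ}
    (hg : Continuous g) (hg0 : ∀ x, 0 ≤ g x) {q : ℝ → ℝ}
    (hq_nonneg : ∀ᵐ t ∂volume.restrict (Icc a b), 0 ≤ q t)
    (hq_symm : ∀ᵐ t ∂volume.restrict (Icc a b), q t = q (a + b - t))
    (hq_mono : MonotoneOn q (Icc a ((a + b) / 2))) {u u₁ : ℝ → ℝ}
    (hu : IsCaraSol a b (fun s x => q s * g x) u u₁) (hends : u a = u b) :
    (∀ t ∈ Icc a b, u t = u (a + b - t)) ∧ MonotoneOn u (Icc a ((a + b) / 2)) :=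
  ⟨hu.eq_reflect hab hg hg0 hq_nonneg hq_symm hq_mono hends,
    hu.monotoneOn_left_half hab hg hg0 hq_nonneg hq_symm hq_mono hends⟩

/-- **Symmetry of positive solutions.** If `q ≥ 0` is symmetric
about `c = (a+b)/2` and non-decreasing on `[a,c]`, then every positive solution
of the Dirichlet problem `u'' + q(t) g(u) = 0`, `u(a) = 0 = u(b)`, is symmetric
and non-decreasing on `[a,c]`. -/
theorem symmetry_of_positive_solutions
    (a b : ℝ) (hab : a < b)
    (g : ℝ → ℝ)
    (hg_C1 : ContDiffOn ℝ 1 g (Set.Ici 0))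
    (hg0 : g 0 = 0)
    (hg_pos : ∀ s > 0, 0 < g s)
    (hg_ext : ∀ s ≤ (0 : ℝ), g s = 0)
    (q : ℝ → ℝ)
    (hq_int : IntegrableOn q (Set.Icc a b))
    (hq_nonneg : ∀ᵐ t ∂(volume.restrict (Set.Icc a b)), 0 ≤ q t)
    (hq_ne : ¬ (∀ᵐ t ∂(volume.restrict (Set.Icc a b)), q t = 0))
    (hq_symm : ∀ᵐ t ∂(volume.restrict (Set.Icc a b)), q t = q (a + b - t))
    (hq_mono : MonotoneOn q (Set.Icc a ((a + b) / 2)))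
    (u u₁ : ℝ → ℝ)
    (hu_sol : IsCaraSol a b (fun s x => q s * g x) u u₁)
    (hua : u a = 0) (hub : u b = 0)
    (hu_pos : ∀ t ∈ Set.Ioo a b, 0 < u t) :
    (∀ t ∈ Set.Icc a b, u t = u (a + b - t)) ∧
    MonotoneOn u (Set.Icc a ((a + b) / 2)) := by
  exact symmetry_of_positive_solutions_general hab
    (continuous_of_continuousOn_Ici_of_eq_zero hg_C1.continuousOn hg_ext)
    (fun s => (le_or_gt s 0).elim (fun hs => (hg_ext s hs).ge) fun hs => (hg_pos s hs).le)
    hq_nonneg hq_symm hq_mono hu_sol (hua.trans hub.symm)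
end
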